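/- The field ℚ(√2, √5) has narrow class number 1. -/

import Mathlib

/-!
Put `φ = (1 + b) / 2`, the golden ratio. The trace form is diagonal on `1, a, b, a * b`, and passing
to the integral elements `1, a, φ, a * φ` shows that the discriminant of `H` divides `1600`. The
Minkowski bound of this totally real quartic field is then at most `15 / 4`, and no ideal has norm
`2` or `3` because `φ` is a root of `X ^ 2 - X - 1`, which has no root modulo `2` or `3`. So every
ideal of `𝓞 H` is principal.

The units have every possible combination of signs: `φ + a` is a unit, with inverse `φ * (φ - a)`,
and it is negative exactly at the embedding where `a` and `b` are both negative. Choosing the signs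
of the square roots `a` and `b` moves this embedding anywhere, and products of the resulting units
make any generator of a fractional ideal totally positive.
-/

open NumberField Module
open scoped nonZeroDivisors

/-- The narrow class group of a number field `F`: the quotient of the group of invertible
fractional ideals of `F` by the subgroup of principal fractional ideals generated by
totally positive elements. -/
noncomputable def narrowClassGroup (F : Type*) [Field F] [NumberField F] :=
  (FractionalIdeal (𝓞 F)⁰ F)ˣ ⧸
    Subgroup.closure {I : (FractionalIdeal (𝓞 F)⁰ F)ˣ |
      ∃ x : F, (∀ τ : F →+* ℝ, 0 < τ x) ∧
        (I : FractionalIdeal (𝓞 F)⁰ F) = FractionalIdeal.spanSingleton (𝓞 F)⁰ x}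

/-- The narrow class number of a number field. -/
noncomputable def narrowClassNumber (F : Type*) [Field F] [NumberField F] : ℕ :=
  Nat.card (narrowClassGroup F)

theorem trace_eq_zero_of_sq_eq_of_not_isSquare {F L : Type*} [Field F] [Field L] [Algebra F L]
    [FiniteDimensional F L] {x : L} {q : F} (hx : x ^ 2 = algebraMap F L q)
    (hq : ¬ IsSquare q) : Algebra.trace F L x = 0 := by
  have hmin : minpoly F x = Polynomial.X ^ 2 - Polynomial.C q :=
    (minpoly.eq_of_irreducible_of_monic
      (X_pow_sub_C_irreducible_of_prime Nat.prime_two fun r hr ↦ hq ⟨r, by rw [← hr, sq]⟩)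
      (by simp [hx]) (Polynomial.monic_X_pow_sub_C q two_ne_zero)).symm
  rw [trace_eq_finrank_mul_minpoly_nextCoeff, hmin,
    Polynomial.nextCoeff_of_natDegree_pos (by simp)]
  simp

theorem star_eq_self_of_sq_eq_ofReal {z : ℂ} {r : ℝ} (hr : 0 ≤ r) (hz : z ^ 2 = r) :
    star z = z := by
  have : z ^ 2 = (√r : ℂ) ^ 2 := by rw [hz, ← Complex.ofReal_pow, Real.sq_sqrt hr]
  rcases sq_eq_sq_iff_eq_or_eq_neg.mp this with h | h <;> simp [h]

/-- `a` and `b` are square roots of `m, n : F`, and none of `m`, `n`, `m * n` is a square in `F`.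
In characteristic different from `2` this says that `F(a, b)` is a biquadratic extension of `F`. -/
structure IsBiquadraticPair {F L : Type*} [Field F] [Field L] [Algebra F L]
    (a b : L) (m n : F) : Prop where
  sq_left : a ^ 2 = algebraMap F L m
  sq_right : b ^ 2 = algebraMap F L n
  not_isSquare_left : ¬ IsSquare m
  not_isSquare_right : ¬ IsSquare n
  not_isSquare_mul : ¬ IsSquare (m * n)

namespace IsBiquadraticPair

section Field

variable {F L : Type*} [Field F] [Field L] [Algebra F L] {a b : L} {m n : F}

protected theorem mul_ne_zero (h : IsBiquadraticPair a b m n) : m * n ≠ 0 := fun h0 ↦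
  h.not_isSquare_mul (h0 ▸ IsSquare.zero)

variable [FiniteDimensional F L]

theorem traceMatrix_eq (h : IsBiquadraticPair a b m n) :
    Algebra.traceMatrix F ![1, a, b, a * b] =
      Matrix.diagonal ((finrank F L : F) • ![1, m, n, m * n]) := by
  have trace_algebraMap (q : F) : Algebra.trace F L (algebraMap F L q) = finrank F L * q := by
    rw [Algebra.trace_algebraMap, nsmul_eq_mul]
  have trace_algebraMap_mul {x : L} (hx : Algebra.trace F L x = 0) (q : F) :
      Algebra.trace F L (algebraMap F L q * x) = 0 := by
    rw [← Algebra.smul_def, map_smul, hx, smul_zero]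
  have ha : a * a = algebraMap F L m := sq a ▸ h.sq_left
  have hb : b * b = algebraMap F L n := sq b ▸ h.sq_right
  have trace_one : Algebra.trace F L 1 = finrank F L := by simpa using trace_algebraMap 1
  have trace_a := trace_eq_zero_of_sq_eq_of_not_isSquare h.sq_left h.not_isSquare_left
  have trace_b := trace_eq_zero_of_sq_eq_of_not_isSquare h.sq_right h.not_isSquare_right
  have trace_ab : Algebra.trace F L (a * b) = 0 :=
    trace_eq_zero_of_sq_eq_of_not_isSquare (by rw [mul_pow, h.sq_left, h.sq_right, map_mul])
      h.not_isSquare_mul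
  have trace_a_ab : Algebra.trace F L (a * (a * b)) = 0 := by
    rw [← mul_assoc, ha, trace_algebraMap_mul trace_b]
  have trace_b_ab : Algebra.trace F L (b * (a * b)) = 0 := by
    rw [mul_left_comm, hb, mul_comm, trace_algebraMap_mul trace_a]
  have trace_ab_ab : Algebra.trace F L (a * b * (a * b)) = finrank F L * (m * n) := by
    rw [mul_mul_mul_comm, ha, hb, ← map_mul, trace_algebraMap]
  ext i j
  rw [Algebra.traceMatrix_apply, Algebra.traceForm_apply]
  fin_cases i <;> fin_cases j <;>
    simp [ha, hb, trace_algebraMap, trace_one, trace_a, trace_b, trace_ab, trace_a_ab, trace_b_ab,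
      trace_ab_ab, mul_comm b a, mul_comm (a * b) a, mul_comm (a * b) b]

theorem discr_eq (h : IsBiquadraticPair a b m n) :
    Algebra.discr F ![1, a, b, a * b] = finrank F L ^ 4 * (m * n) ^ 2 := by
  rw [Algebra.discr_def, h.traceMatrix_eq, Matrix.det_diagonal, Fin.prod_univ_four]
  simp only [Pi.smul_apply, smul_eq_mul, Matrix.cons_val]
  ring

theorem discr_one_add_div_two_eq (h : IsBiquadraticPair a b m n) :
    Algebra.discr F ![1, a, (1 + b) / 2, a * ((1 + b) / 2)] =
      finrank F L ^ 4 * (m * n) ^ 2 / 16 := by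
  let P : Matrix (Fin 4) (Fin 4) F :=
    !![1, 0, 0, 0; 0, 1, 0, 0; 1 / 2, 0, 1 / 2, 0; 0, 1 / 2, 0, 1 / 2]
  have hP : ![1, a, (1 + b) / 2, a * ((1 + b) / 2)] =
      (P.map (algebraMap F L)).mulVec ![1, a, b, a * b] := by
    ext i
    fin_cases i <;> simp [P, Matrix.mulVec, dotProduct, Fin.sum_univ_four, map_ofNat] <;> ring
  have hdet : P.det = (1 / 2) ^ 2 := by
    simp [P, Matrix.det_succ_row_zero, Fin.sum_univ_succ, Fin.succAbove, sq]
  rw [hP, Algebra.discr_of_matrix_mulVec, h.discr_eq, hdet, show (16 : F) = 2 ^ 4 by norm_num]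
  simp only [← pow_mul, one_div, inv_pow]
  ring

variable [NeZero (2 : F)]

theorem linearIndependent (h : IsBiquadraticPair a b m n) (hdeg : finrank F L = 4) :
    LinearIndependent F ![1, a, b, a * b] := by
  by_contra hli
  have hdiscr := Algebra.discr_zero_of_not_linearIndependent F hli
  rw [h.discr_eq, hdeg] at hdiscr
  have hfour : (4 : F) ≠ 0 := by
    rw [show (4 : F) = 2 ^ 2 by norm_num]
    exact pow_ne_zero 2 two_ne_zero
  simp [hfour, h.mul_ne_zero] at hdiscr

theorem adjoin_eq_top (h : IsBiquadraticPair a b m n) (hdeg : finrank F L = 4) :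
    Algebra.adjoin F {a, b} = ⊤ := by
  have hspan := (h.linearIndependent hdeg).span_eq_top_of_card_eq_finrank (by simp [hdeg])
  have ha : a ∈ Algebra.adjoin F {a, b} := Algebra.subset_adjoin (by simp)
  have hb : b ∈ Algebra.adjoin F {a, b} := Algebra.subset_adjoin (by simp)
  rw [← Algebra.toSubmodule_eq_top, eq_top_iff, ← hspan, Submodule.span_le]
  rintro _ ⟨i, rfl⟩
  rw [SetLike.mem_coe, Subalgebra.mem_toSubmodule]
  fin_cases i
  exacts [one_mem _, ha, hb, mul_mem ha hb]

end Field

section NumberField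

variable {K : Type*} [Field K] [NumberField K] {a b : K} {m n : ℚ}

theorem ringHom_ext (h : IsBiquadraticPair a b m n) (hdeg : finrank ℚ K = 4)
    {A : Type*} [Ring A] [Algebra ℚ A] {f g : K →+* A} (ha : f a = g a) (hb : f b = g b) :
    f = g := by
  have := AlgHom.ext_of_adjoin_eq_top (h.adjoin_eq_top hdeg) (φ₁ := f.toRatAlgHom)
    (φ₂ := g.toRatAlgHom) (by rintro x (rfl | rfl) <;> simpa)
  exact RingHom.ext fun x ↦ DFunLike.congr_fun this x

theorem isTotallyReal (h : IsBiquadraticPair a b m n) (hdeg : finrank ℚ K = 4)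
    (hm : 0 ≤ m) (hn : 0 ≤ n) : IsTotallyReal K where
  isReal w := by
    rw [InfinitePlace.isReal_iff, ComplexEmbedding.isReal_iff]
    exact h.ringHom_ext hdeg
      (star_eq_self_of_sq_eq_ofReal (Rat.cast_nonneg.mpr hm) (by simp [← map_pow, h.sq_left]))
      (star_eq_self_of_sq_eq_ofReal (Rat.cast_nonneg.mpr hn) (by simp [← map_pow, h.sq_right]))

end NumberField

end IsBiquadraticPair

section Discriminant

theorem discr_basis_dvd_discr {R S ι : Type*} [CommRing R] [CommRing S] [Algebra R S]
    [Fintype ι] [DecidableEq ι] (B : Basis ι R S) (v : ι → S) :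
    Algebra.discr R B ∣ Algebra.discr R v := by
  rw [← B.toMatrix_map_vecMul v, Algebra.discr_of_matrix_vecMul]
  exact dvd_mul_left _ _

variable {K : Type*} [Field K] [NumberField K] {ι : Type*} [Fintype ι] [DecidableEq ι]

theorem numberField_discr_dvd_discr (hι : Fintype.card ι = finrank ℚ K) (v : ι → 𝓞 K) :
    discr K ∣ Algebra.discr ℤ v := by
  have e : Module.Free.ChooseBasisIndex ℤ (𝓞 K) ≃ ι := Fintype.equivOfCardEq <| by
    rw [hι, ← RingOfIntegers.rank, finrank_eq_card_chooseBasisIndex]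
  let B := (RingOfIntegers.basis K).reindex e
  exact discr_eq_discr K B ▸ discr_basis_dvd_discr B v

theorem intCast_discr_eq_discr_coe (v : ι → 𝓞 K) :
    (Algebra.discr ℤ v : ℚ) = Algebra.discr ℚ (fun i ↦ (v i : K)) := by
  simp only [Algebra.discr_def]
  rw [← eq_intCast (Int.castRingHom ℚ), RingHom.map_det]
  congr 1
  ext i j
  simp [Algebra.traceMatrix_apply, Algebra.traceForm_apply, Algebra.coe_trace_int]

end Discriminant

section Integrality

variable {L : Type*} [Field L]

theorem isIntegral_of_sq_eq_intCast {x : L} {m : ℤ} (hx : x ^ 2 = m) : IsIntegral ℤ x :=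
  .of_pow two_pos <| by simpa [hx] using isIntegral_algebraMap (R := ℤ) (A := L) (x := m)

open Polynomial in
theorem isIntegral_one_add_div_two [NeZero (2 : L)] {b : L} {k : ℤ} (hb : b ^ 2 = 4 * k + 1) :
    IsIntegral ℤ ((1 + b) / 2) := by
  refine ⟨X ^ 2 - X - C k, by monicity!, ?_⟩
  rw [eval₂_sub, eval₂_sub, eval₂_X_pow, eval₂_X, eval₂_C, eq_intCast]
  field_simp
  linear_combination hb

end Integrality

theorem IsBiquadraticPair.numberField_discr_dvd {K : Type*} [Field K] [NumberField K] {a b : K}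
    {m k : ℤ} (h : IsBiquadraticPair a b (m : ℚ) (4 * k + 1)) (hdeg : finrank ℚ K = 4) :
    discr K ∣ 16 * (m * (4 * k + 1)) ^ 2 := by
  have ha : IsIntegral ℤ a := isIntegral_of_sq_eq_intCast (by simpa using h.sq_left)
  have hb : IsIntegral ℤ ((1 + b) / 2) :=
    isIntegral_one_add_div_two (by simpa using h.sq_right)
  obtain ⟨α, hα⟩ := (IsIntegralClosure.isIntegral_iff (A := 𝓞 K)).mp ha
  obtain ⟨ω, hω⟩ := (IsIntegralClosure.isIntegral_iff (A := 𝓞 K)).mp hb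
  have hv : (fun i ↦ (![1, α, ω, α * ω] i : K)) = ![1, a, (1 + b) / 2, a * ((1 + b) / 2)] := by
    ext i
    fin_cases i <;> simp [hα, hω]
  have hdiscr : Algebra.discr ℤ ![1, α, ω, α * ω] = 16 * (m * (4 * k + 1)) ^ 2 := by
    rw [← Int.cast_inj (α := ℚ), intCast_discr_eq_discr_coe, hv, h.discr_one_add_div_two_eq, hdeg]
    push_cast
    ring
  exact hdiscr ▸ numberField_discr_dvd_discr (by simp [hdeg]) _

section ClassNumber

theorem cardQuot_ne_prime_of_aeval_eq_zero {R : Type*} [CommRing R] {f : Polynomial ℤ} {x : R}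
    (hx : Polynomial.aeval x f = 0) {p : ℕ} (hp : p.Prime)
    (hf : ∀ y : ZMod p, Polynomial.aeval y f ≠ 0) (I : Ideal R) : Submodule.cardQuot I ≠ p := by
  intro hI
  have hcard : Nat.card (R ⧸ I) = p := hI
  have : Finite (R ⧸ I) := Nat.finite_of_card_ne_zero (hcard ▸ hp.ne_zero)
  have := Fintype.ofFinite (R ⧸ I)
  let e := ZMod.ringEquivOfPrime (R ⧸ I) hp (by rw [← Nat.card_eq_fintype_card, hcard])
  let g : R →ₐ[ℤ] ZMod p := (e.symm.toRingHom.comp (Ideal.Quotient.mk I)).toIntAlgHom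
  exact hf (g x) (by rw [Polynomial.aeval_algHom_apply, hx, map_zero])

variable {K : Type*} [Field K] [NumberField K]

theorem isPrincipalIdealRing_of_quartic_of_abs_discr_le [IsTotallyReal K] (hdeg : finrank ℚ K = 4)
    (hdiscr : |discr K| ≤ 1820) (h2 : ∀ I : Ideal (𝓞 K), Ideal.absNorm I ≠ 2)
    (h3 : ∀ I : Ideal (𝓞 K), Ideal.absNorm I ≠ 3) : IsPrincipalIdealRing (𝓞 K) := by
  refine RingOfIntegers.isPrincipalIdealRing_of_isPrincipal_of_norm_le fun I hI ↦ ?_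
  -- The Minkowski bound is `4! / 4 ^ 4 * √|discr K|`, which is below `4` iff `|discr K| ≤ 1820`.
  have hsqrt : √|(discr K : ℝ)| < 128 / 3 := by
    rw [Real.sqrt_lt' (by norm_num)]
    calc |(discr K : ℝ)| ≤ 1820 := by exact_mod_cast hdiscr
      _ < (128 / 3) ^ 2 := by norm_num
  have hlt : Ideal.absNorm (I : Ideal (𝓞 K)) < 4 := by
    rw [IsTotallyReal.nrComplexPlaces_eq_zero, hdeg] at hI
    rw [← Nat.cast_lt (α := ℝ)]
    refine hI.trans_lt ?_
    norm_num [Nat.factorial]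
    linarith
  have hone : Ideal.absNorm (I : Ideal (𝓞 K)) = 1 := by
    have h0 := Ideal.absNorm_ne_zero_of_nonZeroDivisors I
    have := h2 I
    have := h3 I
    lia
  rw [Ideal.absNorm_eq_one_iff.mp hone]
  exact top_isPrincipal

end ClassNumber

section NarrowClassNumber

variable {F : Type*} [Field F]

theorem exists_unit_neg_iff_mem (h : ∀ τ : F →+* ℝ, ∃ u : (𝓞 F)ˣ, ∀ σ : F →+* ℝ, σ u < 0 ↔ σ = τ)
    (S : Finset (F →+* ℝ)) : ∃ u : (𝓞 F)ˣ, ∀ σ : F →+* ℝ, σ u < 0 ↔ σ ∈ S := by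
  classical
  induction S using Finset.induction_on with
  | empty => exact ⟨1, by simp⟩
  | insert τ S hτ ih =>
    obtain ⟨u, hu⟩ := h τ
    obtain ⟨v, hv⟩ := ih
    refine ⟨u * v, fun σ ↦ ?_⟩
    have hσ (w : (𝓞 F)ˣ) : 0 < σ w ↔ ¬ σ w < 0 := by
      have : σ w ≠ 0 := (map_ne_zero σ).mpr (RingOfIntegers.coe_ne_zero_iff.mpr w.ne_zero)
      grind
    rw [Units.val_mul, map_mul, map_mul, mul_neg_iff, hσ, hσ, hu, hv, Finset.mem_insert]
    grind

variable [NumberField F]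

theorem exists_unit_mul_totallyPositive
    (h : ∀ τ : F →+* ℝ, ∃ u : (𝓞 F)ˣ, ∀ σ : F →+* ℝ, σ u < 0 ↔ σ = τ) {x : F} (hx : x ≠ 0) :
    ∃ u : (𝓞 F)ˣ, ∀ τ : F →+* ℝ, 0 < τ (u * x) := by
  classical
  obtain ⟨u, hu⟩ := exists_unit_neg_iff_mem h {σ | σ x < 0}
  refine ⟨u, fun τ ↦ ?_⟩
  have hτ : τ u < 0 ↔ τ x < 0 := by simpa using hu τ
  have hux : τ u ≠ 0 ∧ τ x ≠ 0 := by simp [hx]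
  rw [map_mul, mul_pos_iff]
  grind

theorem narrowClassNumber_eq_one_of_forall_eq_spanSingleton
    (h : ∀ I : (FractionalIdeal (𝓞 F)⁰ F)ˣ, ∃ x : F, (∀ τ : F →+* ℝ, 0 < τ x) ∧
      (I : FractionalIdeal (𝓞 F)⁰ F) = FractionalIdeal.spanSingleton (𝓞 F)⁰ x) :
    narrowClassNumber F = 1 := by
  have htop : Subgroup.closure {I : (FractionalIdeal (𝓞 F)⁰ F)ˣ |
      ∃ x : F, (∀ τ : F →+* ℝ, 0 < τ x) ∧
        (I : FractionalIdeal (𝓞 F)⁰ F) = FractionalIdeal.spanSingleton (𝓞 F)⁰ x} = ⊤ :=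
    eq_top_iff.mpr fun I _ ↦ Subgroup.subset_closure (h I)
  rw [narrowClassNumber, narrowClassGroup, htop, Nat.card_eq_one_iff_unique]
  exact ⟨QuotientGroup.subsingleton_quotient_top, inferInstance⟩

theorem narrowClassNumber_eq_one_of_exists_unit_neg_iff_eq [IsPrincipalIdealRing (𝓞 F)]
    (h : ∀ τ : F →+* ℝ, ∃ u : (𝓞 F)ˣ, ∀ σ : F →+* ℝ, σ u < 0 ↔ σ = τ) :
    narrowClassNumber F = 1 := by
  refine narrowClassNumber_eq_one_of_forall_eq_spanSingleton fun I ↦ ?_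
  obtain ⟨x, hx⟩ := (FractionalIdeal.isPrincipal_iff (I : FractionalIdeal (𝓞 F)⁰ F)).mp
    inferInstance
  have hx0 : x ≠ 0 := by
    rintro rfl
    simp at hx
  obtain ⟨u, hu⟩ := exists_unit_mul_totallyPositive h hx0
  refine ⟨u * x, hu, ?_⟩
  rw [hx, ← FractionalIdeal.spanSingleton_mul_spanSingleton,
    ← FractionalIdeal.coeIdeal_span_singleton, Ideal.span_singleton_eq_top.mpr u.isUnit,
    FractionalIdeal.coeIdeal_top, one_mul]

end NarrowClassNumber

section SqrtTwoSqrtFive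

section CharZero

variable {K : Type*} [Field K] [CharZero K] {a b : K}

theorem isBiquadraticPair_two_five (ha : a ^ 2 = 2) (hb : b ^ 2 = 5) :
    IsBiquadraticPair a b (2 : ℚ) 5 where
  sq_left := by simp [ha]
  sq_right := by simp [hb]
  not_isSquare_left := by norm_num
  not_isSquare_right := by norm_num
  not_isSquare_mul := by norm_num

theorem exists_ringOfIntegers_coe_eq_goldenRatio (hb : b ^ 2 = 5) :
    ∃ φ : 𝓞 K, (φ : K) = (1 + b) / 2 ∧ φ ^ 2 = φ + 1 := by
  obtain ⟨φ, hφ⟩ := (IsIntegralClosure.isIntegral_iff (A := 𝓞 K)).mp <|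
    isIntegral_one_add_div_two (b := b) (k := 1) (by rw [hb]; norm_num)
  refine ⟨φ, hφ, RingOfIntegers.ext ?_⟩
  simp only [map_pow, map_add, map_one, hφ]
  linear_combination hb / 4

theorem one_add_div_two_add_neg_iff {x y : ℝ} (hx : x ^ 2 = 2) (hy : y ^ 2 = 5) :
    (1 + y) / 2 + x < 0 ↔ x < 0 ∧ y < 0 := by
  refine ⟨fun h ↦ ?_, fun h ↦ by nlinarith [h.1, h.2]⟩
  have hy_gt : -3 < y := by nlinarith
  have hx_neg : x < 0 := by nlinarith
  refine ⟨hx_neg, ?_⟩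
  have : -1.5 < x := by nlinarith
  by_contra! hy0
  have : 2.2 < y := by nlinarith
  linarith

theorem exists_unit_neg_iff_neg_and_neg_sqrtTwo_sqrtFive (ha : a ^ 2 = 2) (hb : b ^ 2 = 5) :
    ∃ u : (𝓞 K)ˣ, ∀ σ : K →+* ℝ, σ u < 0 ↔ σ a < 0 ∧ σ b < 0 := by
  obtain ⟨α, rfl⟩ := (IsIntegralClosure.isIntegral_iff (A := 𝓞 K)).mp <|
    isIntegral_of_sq_eq_intCast (x := a) (m := 2) (by simp [ha])
  obtain ⟨φ, hφ, hφ_sq⟩ := exists_ringOfIntegers_coe_eq_goldenRatio hb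
  have hα : α ^ 2 = 2 := RingOfIntegers.ext (by simp [ha, map_ofNat])
  have hu : (φ + α) * (φ * (φ - α)) = 1 := by
    linear_combination (φ + 1) * hφ_sq - φ * hα
  refine ⟨Units.mkOfMulEqOne _ _ hu, fun σ ↦ ?_⟩
  have hσ : σ (Units.mkOfMulEqOne _ _ hu : 𝓞 K) = (1 + σ b) / 2 + σ α := by
    simp [hφ, map_ofNat]
  rw [hσ]
  exact one_add_div_two_add_neg_iff (by rw [← map_pow, ha, map_ofNat])
    (by rw [← map_pow, hb, map_ofNat])

end CharZero

variable {K : Type*} [Field K] [NumberField K] {a b : K}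

theorem absNorm_ne_prime_of_sq_eq_five (hb : b ^ 2 = 5) {p : ℕ} (hp : p.Prime)
    (hroot : ∀ y : ZMod p, y ^ 2 ≠ y + 1) (I : Ideal (𝓞 K)) : Ideal.absNorm I ≠ p := by
  obtain ⟨φ, -, hφ⟩ := exists_ringOfIntegers_coe_eq_goldenRatio hb
  refine cardQuot_ne_prime_of_aeval_eq_zero (f := .X ^ 2 - .X - 1) (x := φ) ?_ hp (fun y ↦ ?_) I
  · simp [hφ]
  · simpa [sub_sub, sub_eq_zero] using hroot y

theorem isPrincipalIdealRing_sqrtTwo_sqrtFive (ha : a ^ 2 = 2) (hb : b ^ 2 = 5)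
    (hdeg : finrank ℚ K = 4) : IsPrincipalIdealRing (𝓞 K) := by
  have hab := isBiquadraticPair_two_five ha hb
  have := hab.isTotallyReal hdeg (by norm_num) (by norm_num)
  have hdvd : discr K ∣ 1600 :=
    IsBiquadraticPair.numberField_discr_dvd (m := 2) (k := 1) (by norm_num; exact hab) hdeg
  have hle : |discr K| ≤ 1600 := Int.le_of_dvd (by norm_num) ((abs_dvd _ _).mpr hdvd)
  exact isPrincipalIdealRing_of_quartic_of_abs_discr_le hdeg (hle.trans (by norm_num))
    (absNorm_ne_prime_of_sq_eq_five hb Nat.prime_two (by decide))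
    (absNorm_ne_prime_of_sq_eq_five hb Nat.prime_three (by decide))

theorem exists_unit_neg_iff_eq_sqrtTwo_sqrtFive (ha : a ^ 2 = 2) (hb : b ^ 2 = 5)
    (hdeg : finrank ℚ K = 4) (τ : K →+* ℝ) :
    ∃ u : (𝓞 K)ˣ, ∀ σ : K →+* ℝ, σ u < 0 ↔ σ = τ := by
  wlog hτa : τ a < 0 generalizing a
  · have h0 : τ a ≠ 0 := (map_ne_zero τ).mpr (by rintro rfl; norm_num at ha)
    exact this (a := -a) (by simpa using ha) (by rw [map_neg]; grind)
  wlog hτb : τ b < 0 generalizing b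
  · have h0 : τ b ≠ 0 := (map_ne_zero τ).mpr (by rintro rfl; norm_num at hb)
    exact this (b := -b) (by simpa using hb) (by rw [map_neg]; grind)
  obtain ⟨u, hu⟩ := exists_unit_neg_iff_neg_and_neg_sqrtTwo_sqrtFive ha hb
  refine ⟨u, fun σ ↦ (hu σ).trans ⟨fun ⟨hσa, hσb⟩ ↦ ?_, fun h ↦ h ▸ ⟨hτa, hτb⟩⟩⟩
  have eq_of_sq_eq {x y : ℝ} (hx : x < 0) (hy : y < 0) (hxy : x ^ 2 = y ^ 2) : x = y := by
    nlinarith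
  refine (isBiquadraticPair_two_five ha hb).ringHom_ext hdeg (eq_of_sq_eq hσa hτa ?_)
    (eq_of_sq_eq hσb hτb ?_)
  · simp only [← map_pow, ha, map_ofNat]
  · simp only [← map_pow, hb, map_ofNat]

end SqrtTwoSqrtFive

/-- The field `ℚ(√2, √5)` has narrow class number `1`. -/
theorem narrowClassNumber_sqrt2_sqrt5_eq_one
    (H : Type*) [Field H] [NumberField H]
    (a b : H) (ha : a ^ 2 = 2) (hb : b ^ 2 = 5) (hdeg : finrank ℚ H = 4) :
    narrowClassNumber H = 1 := by
  have := isPrincipalIdealRing_sqrtTwo_sqrtFive ha hb hdeg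
  exact narrowClassNumber_eq_one_of_exists_unit_neg_iff_eq
    (exists_unit_neg_iff_eq_sqrtTwo_sqrtFive ha hb hdeg)
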